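/- Let (T, Λ) be a cookie cutter system, let ψ : Λ → ℝ be Hölder continuous, write φ = −log|T'|, and fix α ∈ ℝ. Define S_α = { t ∈ ℝ : there exist a continuous function Φ : Λ → 2πℤ (continuous with values in 2πℤ), a constant b ∈ ℝ, and a continuous h : Λ → ℝ such that t·(ψ − αφ) = Φ + b + h∘T − h on Λ }. Then S_α is a closed subset of ℝ. -/

import Mathlib

/-!
Write `Λ` for the repeller and `f = ψ - α φ`. Let `σ : Λ → Λ` be the inverse of `T` with values in
the first interval. It is a contraction with a fixed point `p ∈ Λ`. As `f` is Hölder on `Λ`, the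
series `H x = ∑_{m ≥ 1} (f (σ^m x) - f p)` converges uniformly, so `H` is continuous on `Λ`.

If `t f = Φ + b + h ∘ T - h`, evaluating this along the backward orbit `σ^m x` and telescoping gives
`t ∑_{m=1}^n (f (σ^m x) - f p) = h x - h (σ^n x)` modulo `2πℤ`; letting `n → ∞`,
`t H x = h x - h p` modulo `2πℤ`. So the transfer function may always be taken to be `t H`, with an
`H` independent of `t`. With `F = f - H ∘ T + H`, this means that `t ∈ S_α` if and only if
`t (F x - F p) ∈ 2πℤ` for all `x ∈ Λ`, which is an intersection of closed conditions on `t`.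
-/

open MeasureTheory Set

/-- A cookie cutter system: `k ≥ 2` pairwise disjoint closed intervals
`[u j, v j] ⊆ [0,1]`, each mapped bijectively onto `[0,1]` by `T`, with
`T` differentiable with `ε`-Hölder derivative `T'` satisfying `|T'| ≥ lam > 1`. -/
structure CookieCutter where
  k : ℕ
  two_le_k : 2 ≤ k
  u : Fin k → ℝ
  v : Fin k → ℝ
  T : ℝ → ℝ
  T' : ℝ → ℝ
  lam : ℝ
  eps : ℝ
  Ceps : ℝ
  nondeg : ∀ j, u j < v j
  subset_unit : ∀ j, Icc (u j) (v j) ⊆ Icc (0:ℝ) 1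
  pair_disj : Pairwise fun i j => Disjoint (Icc (u i) (v i)) (Icc (u j) (v j))
  bijOn : ∀ j, BijOn T (Icc (u j) (v j)) (Icc (0:ℝ) 1)
  hasDeriv : ∀ x ∈ ⋃ j, Icc (u j) (v j),
    HasDerivWithinAt T (T' x) (⋃ j, Icc (u j) (v j)) x
  eps_pos : 0 < eps
  Ceps_nonneg : 0 ≤ Ceps
  holder : ∀ x ∈ ⋃ j, Icc (u j) (v j), ∀ y ∈ ⋃ j, Icc (u j) (v j),
    |T' x - T' y| ≤ Ceps * |x - y| ^ eps
  one_lt_lam : 1 < lam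
  expanding : ∀ x ∈ ⋃ j, Icc (u j) (v j), lam ≤ |T' x|

/-- The length of a (bounded) interval `I ⊆ ℝ`. -/
noncomputable def setLen (I : Set ℝ) : ℝ := sSup I - sInf I

namespace CookieCutter

variable (S : CookieCutter)

/-- The domain `I_1 ∪ ⋯ ∪ I_k` of the cookie cutter map. -/
def domain : Set ℝ := ⋃ j, Icc (S.u j) (S.v j)

/-- The set `T^{-n}([0,1])`: points whose first `n` iterates stay in the domain. -/
def level (n : ℕ) : Set ℝ := {x | ∀ m < n, S.T^[m] x ∈ S.domain}

/-- `I` is an `n`-th level basic set, i.e. a connected component of `T^{-n}([0,1])`. -/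
def IsBasic (n : ℕ) (I : Set ℝ) : Prop :=
  ∃ x ∈ S.level n, I = connectedComponentIn (S.level n) x

/-- The repeller `Λ = ⋂_{n ≥ 0} T^{-n}([0,1])`. -/
def repeller : Set ℝ := {x | ∀ n, S.T^[n] x ∈ S.domain}

/-- The function `φ = - log |T'|`. -/
noncomputable def phi (x : ℝ) : ℝ := - Real.log |S.T' x|

/-- The Birkhoff sum `fⁿ(x) = Σ_{j<n} f(T^j x)`. -/
noncomputable def birkhoff (f : ℝ → ℝ) (n : ℕ) (x : ℝ) : ℝ :=
  ∑ j ∈ Finset.range n, f (S.T^[j] x)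

/-- `f` is Hölder continuous on the set `A`. -/
def IsHolderOn (f : ℝ → ℝ) (A : Set ℝ) : Prop :=
  ∃ β C : ℝ, 0 < β ∧ β ≤ 1 ∧ 0 ≤ C ∧ ∀ x ∈ A, ∀ y ∈ A, |f x - f y| ≤ C * |x - y| ^ β

/-- `μ` is a normalized Gibbs measure for the potential `ψ`: a Borel probability
measure on the repeller with `C ≤ μ(I_n^i)/e^{ψⁿ(x)} ≤ D` for every basic set. -/
def IsGibbs (ψ : ℝ → ℝ) (μ : Measure ℝ) : Prop :=
  IsProbabilityMeasure μ ∧ μ S.repellerᶜ = 0 ∧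
    ∃ C D : ℝ, 0 < C ∧ 0 < D ∧
      ∀ n, 1 ≤ n → ∀ I, S.IsBasic n I → ∀ x ∈ I ∩ S.repeller,
        C * Real.exp (S.birkhoff ψ n x) ≤ (μ I).toReal ∧
          (μ I).toReal ≤ D * Real.exp (S.birkhoff ψ n x)

/-- `ν` is a `T`-invariant Borel probability measure on the repeller. -/
def IsInvariantProb (ν : Measure ℝ) : Prop :=
  IsProbabilityMeasure ν ∧ ν S.repellerᶜ = 0 ∧
    ∀ A, MeasurableSet A → ν (S.T ⁻¹' A) = ν A

end CookieCutter

open Filter Topology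

/-! ### The repeller and an inverse branch -/

namespace CookieCutter

variable (S : CookieCutter)

lemma repeller_subset_domain : S.repeller ⊆ S.domain := fun _ hx => hx 0

lemma repeller_subset_unit : S.repeller ⊆ Icc (0 : ℝ) 1 := by
  intro x hx
  obtain ⟨j, hj⟩ := mem_iUnion.1 (S.repeller_subset_domain hx)
  exact S.subset_unit j hj

lemma mapsTo_repeller : MapsTo S.T S.repeller S.repeller := fun x hx n => by
  simpa using hx (n + 1)

lemma continuousOn_T : ContinuousOn S.T S.domain := fun x hx =>
  (S.hasDeriv x hx).continuousWithinAt

lemma Icc_subset_domain (j : Fin S.k) : Icc (S.u j) (S.v j) ⊆ S.domain :=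
  subset_iUnion (fun j => Icc (S.u j) (S.v j)) j

/-- The mean value theorem on one branch, with `|T'| ≥ lam`. -/
lemma expand_of_lt (j : Fin S.k) {x y : ℝ} (hx : x ∈ Icc (S.u j) (S.v j))
    (hy : y ∈ Icc (S.u j) (S.v j)) (hxy : x < y) :
    S.lam * |x - y| ≤ |S.T x - S.T y| := by
  have hsub : Icc x y ⊆ S.domain :=
    (Icc_subset_Icc hx.1 hy.2).trans (S.Icc_subset_domain j)
  obtain ⟨c, hc, hc'⟩ := exists_hasDerivAt_eq_slope S.T S.T' hxy (S.continuousOn_T.mono hsub)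
    (fun z hz => ((S.hasDeriv z (hsub (Ioo_subset_Icc_self hz))).mono hsub).hasDerivAt
      (Icc_mem_nhds hz.1 hz.2))
  have h1 := S.expanding c (hsub (Ioo_subset_Icc_self hc))
  rw [hc', abs_div, le_div_iff₀ (abs_pos.2 (sub_pos.2 hxy).ne')] at h1
  rwa [abs_sub_comm x, abs_sub_comm (S.T x)]

lemma expand (j : Fin S.k) {x y : ℝ} (hx : x ∈ Icc (S.u j) (S.v j))
    (hy : y ∈ Icc (S.u j) (S.v j)) :
    S.lam * |x - y| ≤ |S.T x - S.T y| := by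
  rcases lt_trichotomy x y with h | rfl | h
  · exact S.expand_of_lt j hx hy h
  · simp
  · rw [abs_sub_comm x, abs_sub_comm (S.T x)]
    exact S.expand_of_lt j hy hx h

/-- The inverse `σ` of one branch of `T` is a contraction of the repeller. Its fixed point is
produced by the intermediate value theorem for `T x - x`, and lies in the repeller because its
orbit is constant. -/
lemma exists_inverse_branch : ∃ (σ : ℝ → ℝ) (p : ℝ), p ∈ S.repeller ∧ S.T p = p ∧ σ p = p ∧
    MapsTo σ S.repeller S.repeller ∧ (∀ x ∈ S.repeller, S.T (σ x) = x) ∧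
    ∀ x ∈ S.repeller, ∀ y ∈ S.repeller, |σ x - σ y| ≤ S.lam⁻¹ * |x - y| := by
  have hk := S.two_le_k
  let j : Fin S.k := ⟨0, by omega⟩
  have hb := S.bijOn j
  obtain ⟨a, ha, ha0⟩ := hb.surjOn (left_mem_Icc.2 zero_le_one)
  obtain ⟨c, hc, hc1⟩ := hb.surjOn (right_mem_Icc.2 zero_le_one)
  obtain ⟨p, hp, hpT⟩ := isPreconnected_Icc.intermediate_value₂ ha hc
    (S.continuousOn_T.mono (S.Icc_subset_domain j)) continuousOn_id
    (by rw [ha0]; exact (S.subset_unit j ha).1) (by rw [hc1]; exact (S.subset_unit j hc).2)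
  have hpT : S.T p = p := hpT
  have hpR : p ∈ S.repeller := fun n => by
    rw [Function.iterate_fixed hpT]
    exact S.Icc_subset_domain j hp
  have hex : ∀ y ∈ Icc (0 : ℝ) 1, ∃ x ∈ Icc (S.u j) (S.v j), S.T x = y := hb.surjOn
  choose! σ hσ hTσ using hex
  have hu := S.repeller_subset_unit
  refine ⟨σ, p, hpR, hpT, ?_, ?_, fun x hx => hTσ x (hu hx), ?_⟩
  · exact hb.injOn (hσ p (hu hpR)) hp (by rw [hTσ p (hu hpR), hpT])
  · intro x hx n
    cases n with
    | zero => exact S.Icc_subset_domain j (hσ x (hu hx))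
    | succ n => simpa [hTσ x (hu hx)] using hx n
  · intro x hx y hy
    have h := S.expand j (hσ x (hu hx)) (hσ y (hu hy))
    rw [hTσ x (hu hx), hTσ y (hu hy)] at h
    have hl : 0 < S.lam := zero_lt_one.trans S.one_lt_lam
    rwa [← div_eq_inv_mul, le_div_iff₀ hl, mul_comm]

lemma phi_holder {x y : ℝ} (hx : x ∈ S.domain) (hy : y ∈ S.domain) :
    |S.phi x - S.phi y| ≤ S.Ceps * |x - y| ^ S.eps := by
  -- `log` is `1`-Lipschitz on `[1, ∞)`, where `|T'|` takes its values
  have key : ∀ a b : ℝ, 1 ≤ a → 1 ≤ b → Real.log a - Real.log b ≤ |a - b| := by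
    intro a b ha hb
    have hb0 : 0 < b := by linarith
    have ha0 : 0 < a := by linarith
    rw [← Real.log_div ha0.ne' hb0.ne']
    have h1 := Real.log_le_sub_one_of_pos (div_pos ha0 hb0)
    have h2 : a / b - 1 = (a - b) / b := by field_simp
    have h3 : (a - b) / b ≤ |a - b| := by
      rw [div_le_iff₀ hb0]
      nlinarith [le_abs_self (a - b), abs_nonneg (a - b)]
    linarith
  have h1x := S.one_lt_lam.le.trans (S.expanding x hx)
  have h1y := S.one_lt_lam.le.trans (S.expanding y hy)
  have h1 := key _ _ h1x h1y
  have h2 := key _ _ h1y h1x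
  have h3 := abs_abs_sub_abs_le_abs_sub (S.T' x) (S.T' y)
  have h4 := S.holder x hx y hy
  rw [abs_sub_comm] at h2
  unfold phi
  rw [abs_le]
  constructor <;> linarith

end CookieCutter

/-! ### Closedness of `S_α` -/

/-- Membership in `2πℤ`, with the multiplication order of the theorem. -/
lemma mem_twoPi {x : ℝ} :
    x ∈ AddSubgroup.zmultiples (2 * Real.pi) ↔ ∃ m : ℤ, x = 2 * Real.pi * m := by
  rw [AddSubgroup.mem_zmultiples_iff]
  simp only [zsmul_eq_mul]
  exact exists_congr fun m => ⟨fun h => by rw [← h]; ring, fun h => by rw [h]; ring⟩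

lemma isClosed_twoPi : IsClosed (AddSubgroup.zmultiples (2 * Real.pi) : Set ℝ) :=
  AddSubgroup.isClosed_of_discrete

/-- The set `S_α` of `t ∈ ℝ` such that `t(ψ - αφ)` is cohomologous to a function
of the form `Φ + b` with `Φ` continuous and `2πℤ`-valued and `b` constant,
is a closed subset of `ℝ`. -/
theorem Salpha_isClosed (S : CookieCutter) (ψ : ℝ → ℝ)
    (hψ : CookieCutter.IsHolderOn ψ S.repeller) (α : ℝ) :
    IsClosed {t : ℝ | ∃ (Φ h : ℝ → ℝ) (b : ℝ),
      ContinuousOn Φ S.repeller ∧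
      (∀ x ∈ S.repeller, ∃ m : ℤ, Φ x = 2 * Real.pi * m) ∧
      ContinuousOn h S.repeller ∧
      ∀ x ∈ S.repeller, t * (ψ x - α * S.phi x) = Φ x + b + h (S.T x) - h x} := by
  obtain ⟨σ, p, hp, hTp, hσp, hσ, hTσ, hcon⟩ := S.exists_inverse_branch
  obtain ⟨β, C, hβ, -, hC, hψ⟩ := hψ
  have hl : 0 < S.lam := zero_lt_one.trans S.one_lt_lam
  set r := S.lam⁻¹ with hr
  have hr0 : 0 < r := inv_pos.2 hl
  have hr1 : r < 1 := inv_lt_one_of_one_lt₀ S.one_lt_lam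
  set f : ℝ → ℝ := fun x => ψ x - α * S.phi x with hf
  -- `ω` is a modulus of continuity of `f`; the exponents of `ψ` and `φ` need not agree
  set ω : ℝ → ℝ := fun d => C * d ^ β + |α| * (S.Ceps * d ^ S.eps) with hω
  have hfω : ∀ x ∈ S.repeller, ∀ y ∈ S.repeller, |f x - f y| ≤ ω |x - y| := by
    intro x hx y hy
    have h1 := hψ x hx y hy
    have h2 := S.phi_holder (S.repeller_subset_domain hx) (S.repeller_subset_domain hy)
    calc |f x - f y| = |(ψ x - ψ y) - α * (S.phi x - S.phi y)| := by simp only [hf]; ring_nf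
      _ ≤ |ψ x - ψ y| + |α * (S.phi x - S.phi y)| := abs_sub _ _
      _ ≤ ω |x - y| := by
        rw [abs_mul]
        exact add_le_add h1 (mul_le_mul_of_nonneg_left h2 (abs_nonneg _))
  have hωmono : ∀ d e : ℝ, 0 ≤ d → d ≤ e → ω d ≤ ω e := by
    intro d e hd hde
    have h1 := Real.rpow_le_rpow hd hde hβ.le
    have h2 := Real.rpow_le_rpow hd hde S.eps_pos.le
    have := S.Ceps_nonneg
    simp only [hω]
    gcongr
  have hωcont : Continuous ω := by
    simp only [hω]
    have h1 := Real.continuous_rpow_const hβ.le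
    have h2 := Real.continuous_rpow_const S.eps_pos.le
    fun_prop
  have hω0 : ω 0 = 0 := by
    simp [hω, Real.zero_rpow hβ.ne', Real.zero_rpow S.eps_pos.ne']
  have hfcont : ContinuousOn f S.repeller := by
    intro x hx
    rw [ContinuousWithinAt, tendsto_iff_dist_tendsto_zero]
    have hlim : Tendsto (fun y => ω |y - x|) (𝓝[S.repeller] x) (𝓝 0) := by
      have : Continuous fun y => ω |y - x| := by fun_prop
      have h := this.tendsto x
      simp only [sub_self, abs_zero, hω0] at h
      exact h.mono_left nhdsWithin_le_nhds
    refine squeeze_zero' (Eventually.of_forall fun _ => dist_nonneg) ?_ hlim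
    filter_upwards [self_mem_nhdsWithin] with y hy
    exact hfω y hy x hx
  have hσcont : ContinuousOn σ S.repeller := by
    have : LipschitzOnWith ⟨r, hr0.le⟩ σ S.repeller :=
      LipschitzOnWith.of_dist_le_mul fun x hx y hy => hcon x hx y hy
    exact this.continuousOn
  have hit : ∀ n, MapsTo σ^[n] S.repeller S.repeller := fun n => hσ.iterate n
  have hitp : ∀ n, σ^[n] p = p := fun n => Function.iterate_fixed hσp n
  have hitcont : ∀ n, ContinuousOn σ^[n] S.repeller := fun n => hσcont.iterate hσ n
  have hdist : ∀ n, ∀ x ∈ S.repeller, |σ^[n] x - p| ≤ r ^ n := by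
    intro n x hx
    induction n with
    | zero =>
      have h1 := S.repeller_subset_unit hx
      have h2 := S.repeller_subset_unit hp
      simp only [Function.iterate_zero, id, pow_zero, abs_le]
      constructor <;> linarith [h1.1, h1.2, h2.1, h2.2]
    | succ n ih =>
      rw [Function.iterate_succ_apply', pow_succ']
      have h := hcon _ (hit n hx) p hp
      rw [hσp] at h
      exact h.trans (mul_le_mul_of_nonneg_left ih hr0.le)
  have hgeom : ∀ a : ℝ, 0 < a → Summable fun n : ℕ => (r ^ (n + 1)) ^ a := by
    intro a ha
    have h1 : r ^ a < 1 := Real.rpow_lt_one hr0.le hr1 ha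
    have h2 := (summable_nat_add_iff 1).2
      (summable_geometric_of_lt_one (Real.rpow_nonneg hr0.le a) h1)
    refine h2.congr fun n => ?_
    rw [← Real.rpow_natCast, ← Real.rpow_natCast, ← Real.rpow_mul hr0.le, ← Real.rpow_mul hr0.le,
      mul_comm]
  have hsum : Summable fun n : ℕ => ω (r ^ (n + 1)) :=
    ((hgeom β hβ).mul_left C).add (((hgeom _ S.eps_pos).mul_left S.Ceps).mul_left |α|)
  have hterm : ∀ n : ℕ, ∀ x ∈ S.repeller, ‖f (σ^[n + 1] x) - f p‖ ≤ ω (r ^ (n + 1)) :=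
    fun n x hx => (hfω _ (hit _ hx) p hp).trans
      (hωmono _ _ (abs_nonneg _) (hdist _ x hx))
  -- the universal transfer function; index `n` stands for the `(n + 1)`-st backward iterate
  set H : ℝ → ℝ := fun x => ∑' n : ℕ, (f (σ^[n + 1] x) - f p) with hH
  have hHcont : ContinuousOn H S.repeller :=
    continuousOn_tsum (fun n => (hfcont.comp (hitcont _) (hit _)).sub continuousOn_const)
      hsum hterm
  have hHsum : ∀ x ∈ S.repeller, Tendsto
      (fun N => ∑ n ∈ Finset.range N, (f (σ^[n + 1] x) - f p)) atTop (𝓝 (H x)) :=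
    fun x hx => (Summable.of_norm_bounded hsum fun n => hterm n x hx).hasSum.tendsto_sum_nat
  set F : ℝ → ℝ := fun x => f x - H (S.T x) + H x with hF
  have hFcont : ContinuousOn F S.repeller :=
    (hfcont.sub (hHcont.comp (S.continuousOn_T.mono S.repeller_subset_domain)
      S.mapsTo_repeller)).add hHcont
  suffices heq : {t : ℝ | ∃ (Φ h : ℝ → ℝ) (b : ℝ),
      ContinuousOn Φ S.repeller ∧
      (∀ x ∈ S.repeller, ∃ m : ℤ, Φ x = 2 * Real.pi * m) ∧
      ContinuousOn h S.repeller ∧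
      ∀ x ∈ S.repeller, t * (ψ x - α * S.phi x) = Φ x + b + h (S.T x) - h x} =
      ⋂ x ∈ S.repeller, (fun t : ℝ => t * (F x - F p)) ⁻¹'
        (AddSubgroup.zmultiples (2 * Real.pi) : Set ℝ) by
    rw [heq]
    exact isClosed_biInter fun x _ => isClosed_twoPi.preimage (by fun_prop)
  ext t
  simp only [mem_ofPred_eq, mem_iInter, mem_preimage, SetLike.mem_coe]
  constructor
  · rintro ⟨Φ, h, b, -, hΦ, hh, hcoh⟩
    have hΦ' : ∀ x ∈ S.repeller, Φ x ∈ AddSubgroup.zmultiples (2 * Real.pi) :=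
      fun x hx => mem_twoPi.2 (hΦ x hx)
    -- the finite telescoped identity modulo `2πℤ` along the backward orbit of `x`
    have hfin : ∀ x ∈ S.repeller, ∀ N, t * ∑ n ∈ Finset.range N, (f (σ^[n + 1] x) - f p)
        - (h x - h (σ^[N] x)) ∈ AddSubgroup.zmultiples (2 * Real.pi) := by
      intro x hx N
      induction N with
      | zero => simp
      | succ N ih =>
        have e1 := hcoh _ (hit (N + 1) hx)
        have e2 := hcoh p hp
        have e3 : S.T (σ^[N + 1] x) = σ^[N] x := by
          rw [Function.iterate_succ_apply', hTσ _ (hit N hx)]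
        rw [e3] at e1
        rw [hTp] at e2
        have hmem := add_mem ih (sub_mem (hΦ' _ (hit (N + 1) hx)) (hΦ' p hp))
        convert hmem using 1
        rw [Finset.sum_range_succ]
        simp only [hf]
        linear_combination e1 - e2
    have hlim : ∀ x ∈ S.repeller,
        t * H x - (h x - h p) ∈ AddSubgroup.zmultiples (2 * Real.pi) := by
      intro x hx
      have hσlim : Tendsto (fun N => σ^[N] x) atTop (𝓝[S.repeller] p) := by
        refine tendsto_nhdsWithin_iff.2 ⟨?_, Eventually.of_forall fun n => hit n hx⟩
        rw [tendsto_iff_dist_tendsto_zero]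
        exact squeeze_zero (fun _ => dist_nonneg) (fun n => hdist n x hx)
          (tendsto_pow_atTop_nhds_zero_of_lt_one hr0.le hr1)
      have hhlim := (hh p hp).tendsto.comp hσlim
      exact isClosed_twoPi.mem_of_tendsto
        (((hHsum x hx).const_mul t).sub (tendsto_const_nhds.sub hhlim))
        (Eventually.of_forall fun N => hfin x hx N)
    -- up to `2πℤ` the function `t F` is the constant `b`
    have hFb : ∀ x ∈ S.repeller, t * F x - b ∈ AddSubgroup.zmultiples (2 * Real.pi) := by
      intro x hx
      have hmem := add_mem (hΦ' x hx) (sub_mem (hlim x hx) (hlim _ (S.mapsTo_repeller hx)))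
      convert hmem using 1
      have e := hcoh x hx
      simp only [hF, hf]
      linear_combination e
    intro x hx
    convert sub_mem (hFb x hx) (hFb p hp) using 1
    ring
  · intro ht
    refine ⟨fun x => t * (F x - F p), fun x => t * H x, t * F p,
      continuousOn_const.mul (hFcont.sub continuousOn_const),
      fun x hx => mem_twoPi.1 (ht x hx), continuousOn_const.mul hHcont, fun x _ => ?_⟩
    simp only [hF, hf]
    ring
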